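/- Let g ≥ 2 and let H ⊆ GSp_{2g}(ℤ_2) be a subgroup such that H equals the full preimage under mod-2 reduction of its mod-2 image H(2), and such that H(2) contains the embedded copy of S_{2g+1}. Then the homomorphism H → (H(2))^{ab} × (ℤ_2)^× whose first component is mod-2 reduction followed by abelianization and whose second component is the multiplier map mult, induces an isomorphism H/[H,H]‾ ≅ (H(2))^{ab} × (ℤ_2)^×, where [H,H]‾ is the closure of the commutator subgroup of H. -/

import Mathlib

open Matrix

/-- The standard symplectic matrix `Ω`, block-diagonal with `2×2` blocks `[[0,1],[-1,0]]`. -/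
def OmegaMat (g : ℕ) (R : Type) [CommRing R] : Matrix (Fin (2*g)) (Fin (2*g)) R :=
  Matrix.of fun i j =>
    if (i : ℕ) + 1 = (j : ℕ) ∧ (j : ℕ) % 2 = 1 then 1
    else if (j : ℕ) + 1 = (i : ℕ) ∧ (i : ℕ) % 2 = 1 then -1 else 0

/-- The symplectic group `Sp_{2g}(R)`, as a set of invertible matrices:
those `S` with `SᵀΩS = Ω`. -/
def SpSet (g : ℕ) (R : Type) [CommRing R] : Set (GL (Fin (2*g)) R) :=
  {S | (S : Matrix (Fin (2*g)) (Fin (2*g)) R)ᵀ * OmegaMat g R * S = OmegaMat g R}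

/-- The general symplectic group `GSp_{2g}(R)`, as a set of invertible matrices:
those `S` with `SᵀΩS = m·Ω` for some unit `m` (the multiplier). -/
def GSpSet (g : ℕ) (R : Type) [CommRing R] : Set (GL (Fin (2*g)) R) :=
  {S | ∃ m : Rˣ, (S : Matrix (Fin (2*g)) (Fin (2*g)) R)ᵀ * OmegaMat g R * S = (m : R) • OmegaMat g R}

/-- The all-ones vector `t ∈ V = (ℤ/2ℤ)^{2g+2}`. -/
def tvec (g : ℕ) : Fin (2*g+2) → ZMod 2 := fun _ => 1

/-- The line spanned by `t`. -/
def tline (g : ℕ) : Submodule (ZMod 2) (Fin (2*g+2) → ZMod 2) :=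
  Submodule.span (ZMod 2) {tvec g}

/-- `t^⊥`: the vectors of `V` orthogonal to `t` for the standard bilinear form
`⟨u,v⟩ = ∑ uᵢvᵢ`, i.e. those whose coordinates sum to zero. -/
def tperp (g : ℕ) : Set (Fin (2*g+2) → ZMod 2) := {v | ∑ i, v i = 0}

/-- The matrix of the map `ψ : M → V` sending the symplectic basis vector `f_{1,n}`
(column `2n-2`, 0-based) of `M = (ℤ/2ℤ)^{2g}` to `ē_1 + ⋯ + ē_{2n}` and `f_{2,n}`
(column `2n-1`) to `ē_{2n+1} + ē_1 + ⋯ + ē_{2n-1}`; `ψ` composed with the quotient map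
`t^⊥ → W = t^⊥/span(t)` is the identification of `M` with `W` used to realize the
isometries of `W` as the matrix group `Sp_{2g}(ℤ/2ℤ)`. -/
def PsiMat (g : ℕ) : Matrix (Fin (2*g+2)) (Fin (2*g)) (ZMod 2) :=
  Matrix.of fun k j =>
    if (j : ℕ) % 2 = 0 then (if (k : ℕ) < (j : ℕ) + 2 then 1 else 0)
    else (if (k : ℕ) < (j : ℕ) ∨ (k : ℕ) = (j : ℕ) + 1 then 1 else 0)

/-- The permutation matrix of `σ`, acting on coordinates of `V`: `(P_σ v) k = v (σ⁻¹ k)`. -/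
def permMat (g : ℕ) (σ : Equiv.Perm (Fin (2*g+2))) :
    Matrix (Fin (2*g+2)) (Fin (2*g+2)) (ZMod 2) :=
  Matrix.of fun k j => if σ j = k then 1 else 0

/-- `A ∈ Sp_{2g}(ℤ/2ℤ)` is the matrix (w.r.t. the symplectic basis carried by `ψ`) of the
action of the permutation `σ ∈ S_{2g+2}` on `W = t^⊥/span(t)`: this says that each column of
`Ψ·A − P_σ·Ψ` lies in `span(t)`, i.e. `ψ(A·m) ≡ σ·ψ(m) mod t` for every `m ∈ M`.
The embedded copy of `S_{2g+2}` inside `Sp_{2g}(ℤ/2ℤ)` is the set of matrices representing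
some permutation in this sense. -/
def representsPerm (g : ℕ) (A : Matrix (Fin (2*g)) (Fin (2*g)) (ZMod 2))
    (σ : Equiv.Perm (Fin (2*g+2))) : Prop :=
  ∀ j, (fun k => (PsiMat g * A - permMat g σ * PsiMat g) k j) ∈ tline g

/-- Entrywise mod-2 reduction `GL_{2g}(ℤ_2) → GL_{2g}(ℤ/2ℤ)`. -/
noncomputable def redMod2 (g : ℕ) : GL (Fin (2*g)) ℤ_[2] →* GL (Fin (2*g)) (ZMod 2) :=
  Units.map ((PadicInt.toZMod).mapMatrix.toMonoidHom)

section helpers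

lemma OmegaMat_transpose (g : ℕ) (R : Type) [CommRing R] : (OmegaMat g R)ᵀ = - OmegaMat g R := by
  ext i j
  simp only [OmegaMat, transpose_apply, of_apply, Matrix.neg_apply]
  split_ifs <;> first | omega | simp

/-- The index paired with `i`. -/
def partner (g : ℕ) (i : Fin (2*g)) : Fin (2*g) :=
  ⟨if (i : ℕ) % 2 = 0 then i + 1 else i - 1, by have := i.2; split_ifs <;> omega⟩

lemma OmegaMat_sq (g : ℕ) (R : Type) [CommRing R] : OmegaMat g R * OmegaMat g R = -1 := by
  ext i j
  rw [mul_apply, Finset.sum_eq_single (partner g i)]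
  · simp only [OmegaMat, of_apply, Matrix.neg_apply, Matrix.one_apply, partner, Fin.ext_iff]
    split_ifs <;> first | omega | simp
  · intro k _ hk
    have : OmegaMat g R i k = 0 := by
      simp only [OmegaMat, of_apply]
      simp only [partner, ne_eq, Fin.ext_iff] at hk
      split_ifs at hk ⊢ <;> first | omega | rfl | (exfalso; tauto)
    rw [this, zero_mul]
  · simp

lemma OmegaMat_map (g : ℕ) :
    (PadicInt.toZMod (p := 2)).mapMatrix (OmegaMat g ℤ_[2]) = OmegaMat g (ZMod 2) := by
  ext i j
  simp only [OmegaMat, of_apply, RingHom.mapMatrix_apply, map_apply]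
  split_ifs <;> simp

lemma OmegaMat_two_transpose (g : ℕ) : (OmegaMat g (ZMod 2))ᵀ = OmegaMat g (ZMod 2) := by
  rw [OmegaMat_transpose]; ext i j; simp [CharTwo.neg_eq]

lemma OmegaMat_two_sq (g : ℕ) : OmegaMat g (ZMod 2) * OmegaMat g (ZMod 2) = 1 := by
  rw [OmegaMat_sq]; ext i j; simp only [Matrix.neg_apply]; exact CharTwo.neg_eq _

lemma OmegaMat_inj (g : ℕ) (hg : 2 ≤ g) (a b : ℤ_[2])
    (h : a • OmegaMat g ℤ_[2] = b • OmegaMat g ℤ_[2]) : a = b := by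
  have := congrFun (congrFun h ⟨0, by omega⟩) ⟨1, by omega⟩
  simpa [OmegaMat] using this

/-- diagonal similitude matrix -/
noncomputable def Dm (g : ℕ) (u : ℤ_[2]) : Matrix (Fin (2*g)) (Fin (2*g)) ℤ_[2] :=
  diagonal fun i => if (i : ℕ) % 2 = 0 then 1 else u

lemma Dm_mul (g : ℕ) (u v : ℤ_[2]) : Dm g u * Dm g v = Dm g (u * v) := by
  rw [Dm, Dm, diagonal_mul_diagonal, Dm]; congr 1; ext i; split_ifs <;> simp

lemma Dm_one (g : ℕ) : Dm g 1 = 1 := by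
  simp [Dm]

/-- diagonal similitude as a unit -/
noncomputable def Du (g : ℕ) (u : ℤ_[2]ˣ) : GL (Fin (2*g)) ℤ_[2] :=
  ⟨Dm g u, Dm g ((u⁻¹ : ℤ_[2]ˣ) : ℤ_[2]), by rw [Dm_mul]; simp [Dm_one], by rw [Dm_mul]; simp [Dm_one]⟩

lemma Du_mult (g : ℕ) (u : ℤ_[2]ˣ) :
    (Du g u : Matrix (Fin (2*g)) (Fin (2*g)) ℤ_[2])ᵀ * OmegaMat g ℤ_[2] * (Du g u) =
      (u : ℤ_[2]) • OmegaMat g ℤ_[2] := by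
  ext i j
  simp only [Du, Dm, diagonal_transpose, diagonal_mul, mul_diagonal, OmegaMat, of_apply, Matrix.smul_apply,
    smul_eq_mul]
  split_ifs <;> first | omega | simp

lemma toZMod_unit (u : ℤ_[2]ˣ) : PadicInt.toZMod (p := 2) (u : ℤ_[2]) = 1 := by
  have h : IsUnit (PadicInt.toZMod (p := 2) (u : ℤ_[2])) := u.isUnit.map _
  generalize PadicInt.toZMod (p := 2) (u : ℤ_[2]) = a at h
  revert a; decide

lemma redMod2_Du (g : ℕ) (u : ℤ_[2]ˣ) : redMod2 g (Du g u) = 1 := by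
  apply Units.ext
  change (PadicInt.toZMod (p := 2)).mapMatrix (Dm g u) = 1
  ext i j
  simp only [Dm, RingHom.mapMatrix_apply, map_apply, diagonal_apply, Matrix.one_apply]
  split_ifs <;> simp [toZMod_unit]

lemma redMod2_val (g : ℕ) (x : GL (Fin (2*g)) ℤ_[2]) :
    (redMod2 g x : Matrix (Fin (2*g)) (Fin (2*g)) (ZMod 2)) =
      (PadicInt.toZMod (p := 2)).mapMatrix (x : Matrix (Fin (2*g)) (Fin (2*g)) ℤ_[2]) := rfl

lemma toZMod_eq_zero (z : ℤ_[2]) (h : PadicInt.toZMod (p := 2) z = 0) : ∃ w, z = 2 * w := by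
  have : z ∈ RingHom.ker (PadicInt.toZMod (p := 2)) := h
  rw [PadicInt.ker_toZMod, PadicInt.maximalIdeal_eq_span_p, Ideal.mem_span_singleton] at this
  simpa [dvd_def] using this

lemma mat_even (g : ℕ) (M : Matrix (Fin (2*g)) (Fin (2*g)) ℤ_[2])
    (h : (PadicInt.toZMod (p := 2)).mapMatrix M = 0) : ∃ A, M = (2 : ℤ_[2]) • A := by
  have : ∀ i j, ∃ w, M i j = 2 * w := fun i j => toZMod_eq_zero _ (congrFun (congrFun h i) j)
  choose A hA using this
  exact ⟨of A, by ext i j; simp [hA]⟩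

/-- vectors `d k` with `ψ (d k) = e_k + e_{k+1}` -/
def dvec (g k : ℕ) : Fin (2*g) → ZMod 2 := fun j =>
  if k = 0 then (if (j : ℕ) = 0 then 1 else 0)
  else if k % 2 = 1 then (if (j : ℕ) = k - 1 then 1 else 0) + (if (j : ℕ) = k then 1 else 0)
  else (if (j : ℕ) = k - 2 then 1 else 0) + (if (j : ℕ) = k then 1 else 0)

/-- vectors `b k` with `ψ (b k) = e_0 + e_k` -/
def bvec (g : ℕ) : ℕ → Fin (2*g) → ZMod 2
  | 0 => 0
  | k+1 => bvec g k + dvec g k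

lemma mulVec_ind {m : Type} (n : ℕ) (M : Matrix m (Fin n) (ZMod 2)) (a : ℕ) (ha : a < n) :
    M *ᵥ (fun j : Fin n => if (j : ℕ) = a then (1 : ZMod 2) else 0) = fun r => M r ⟨a, ha⟩ := by
  ext r
  rw [mulVec, dotProduct, Finset.sum_eq_single ⟨a, ha⟩]
  · simp
  · intro j _ hj
    simp only [ne_eq, Fin.ext_iff] at hj
    simp [hj]
  · simp

lemma two_zmod : (1 : ZMod 2) + 1 = 0 := rfl

lemma dvec_eq {m : Type} (g k : ℕ) (hk : k < 2 * g) (M : Matrix m (Fin (2*g)) (ZMod 2)) (r : m) :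
    (M *ᵥ dvec g k) r = if k = 0 then M r ⟨0, by omega⟩ else
      if k % 2 = 1 then M r ⟨k-1, by omega⟩ + M r ⟨k, hk⟩
      else M r ⟨k-2, by omega⟩ + M r ⟨k, hk⟩ := by
  unfold dvec
  split_ifs
  · rw [mulVec_ind _ _ _ (by omega)]
  · have := congrFun (mulVec_add M (fun j : Fin (2*g) => if (j : ℕ) = k-1 then (1 : ZMod 2) else 0)
      (fun j : Fin (2*g) => if (j : ℕ) = k then (1 : ZMod 2) else 0)) r
    rw [mulVec_ind _ _ _ (by omega), mulVec_ind _ _ _ (by omega)] at this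
    exact this
  · have := congrFun (mulVec_add M (fun j : Fin (2*g) => if (j : ℕ) = k-2 then (1 : ZMod 2) else 0)
      (fun j : Fin (2*g) => if (j : ℕ) = k then (1 : ZMod 2) else 0)) r
    rw [mulVec_ind _ _ _ (by omega), mulVec_ind _ _ _ (by omega)] at this
    exact this

lemma Psi_dvec (g k : ℕ) (hk : k < 2 * g) (r : Fin (2*g+2)) :
    (PsiMat g *ᵥ dvec g k) r = (if (r : ℕ) = k then 1 else 0) + (if (r : ℕ) = k + 1 then 1 else 0) := by
  rw [dvec_eq g k hk]
  simp only [PsiMat, of_apply]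
  split_ifs <;> first | omega | rfl | (exfalso; tauto)

lemma Omega_dvec (g k : ℕ) (hk : k < 2 * g) (r : Fin (2*g)) :
    (OmegaMat g (ZMod 2) *ᵥ dvec g k) r =
      PsiMat g ⟨k, by omega⟩ r + PsiMat g ⟨k+1, by omega⟩ r := by
  rw [dvec_eq g k hk]
  simp only [PsiMat, OmegaMat, of_apply]
  split_ifs <;> first | omega | rfl | (exfalso; tauto)

lemma Psi_bvec (g k : ℕ) (hk : k ≤ 2 * g) (r : Fin (2*g+2)) :
    (PsiMat g *ᵥ bvec g k) r = (if (r : ℕ) = 0 then 1 else 0) + (if (r : ℕ) = k then 1 else 0) := by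
  induction k with
  | zero => simp only [bvec, mulVec_zero, Pi.zero_apply]; split_ifs <;> rfl
  | succ k ih =>
    rw [bvec, mulVec_add, Pi.add_apply, ih (by omega), Psi_dvec g k (by omega)]
    split_ifs <;> first | omega | rfl | (exfalso; tauto)

lemma Omega_bvec (g k : ℕ) (hk : k ≤ 2 * g) (r : Fin (2*g)) :
    (OmegaMat g (ZMod 2) *ᵥ bvec g k) r =
      PsiMat g ⟨0, by omega⟩ r + PsiMat g ⟨k, by omega⟩ r := by
  induction k with
  | zero => simp only [bvec, mulVec_zero, Pi.zero_apply]; rw [CharTwo.add_self_eq_zero]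
  | succ k ih =>
    rw [bvec, mulVec_add, Pi.add_apply, ih (by omega), Omega_dvec g k (by omega)]
    generalize PsiMat g ⟨k, _⟩ r = a
    generalize PsiMat g _ r = b
    generalize PsiMat g _ r = c
    revert a b c; decide

/-- `E v = v (Ω v)ᵀ` mod 2 -/
def Em (g : ℕ) (v : Fin (2*g) → ZMod 2) : Matrix (Fin (2*g)) (Fin (2*g)) (ZMod 2) :=
  vecMulVec v (OmegaMat g (ZMod 2) *ᵥ v)

/-- data saying that `w` corresponds to `e_k + e_l` -/
def IsPair (g : ℕ) (w : Fin (2*g) → ZMod 2) (k l : Fin (2*g+2)) : Prop :=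
  (∀ r, (PsiMat g *ᵥ w) r = (if r = k then 1 else 0) + (if r = l then 1 else 0)) ∧
  (∀ j, (OmegaMat g (ZMod 2) *ᵥ w) j = PsiMat g k j + PsiMat g l j)

lemma IsPair_bvec (g k : ℕ) (hk : k ≤ 2 * g) :
    IsPair g (bvec g k) ⟨0, by omega⟩ ⟨k, by omega⟩ := by
  refine ⟨fun r => ?_, fun j => Omega_bvec g k hk j⟩
  rw [Psi_bvec g k hk]; simp only [Fin.ext_iff]

lemma IsPair.add {g : ℕ} {v w : Fin (2*g) → ZMod 2} {a k l : Fin (2*g+2)}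
    (hv : IsPair g v a k) (hw : IsPair g w a l) : IsPair g (v + w) k l := by
  refine ⟨fun r => ?_, fun j => ?_⟩
  · rw [mulVec_add, Pi.add_apply, hv.1, hw.1]
    generalize (if r = a then (1 : ZMod 2) else 0) = x
    generalize (if r = k then (1 : ZMod 2) else 0) = y
    generalize (if r = l then (1 : ZMod 2) else 0) = z
    revert x y z; decide
  · rw [mulVec_add, Pi.add_apply, hv.2, hw.2]
    generalize PsiMat g a j = x
    generalize PsiMat g k j = y
    generalize PsiMat g l j = z
    revert x y z; decide

lemma IsPair.dot {g : ℕ} {v w : Fin (2*g) → ZMod 2} {a k : Fin (2*g+2)}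
    (hw : IsPair g w a k) :
    (OmegaMat g (ZMod 2) *ᵥ w) ⬝ᵥ v = (PsiMat g *ᵥ v) a + (PsiMat g *ᵥ v) k := by
  simp only [dotProduct, mulVec, ← Finset.sum_add_distrib]
  refine Finset.sum_congr rfl fun j _ => ?_
  have := hw.2 j
  simp only [mulVec, dotProduct] at this
  rw [this, add_mul]

lemma IsPair.dot_self {g : ℕ} {w : Fin (2*g) → ZMod 2} {a k : Fin (2*g+2)}
    (hw : IsPair g w a k) (hak : a ≠ k) : (OmegaMat g (ZMod 2) *ᵥ w) ⬝ᵥ w = 0 := by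
  rw [hw.dot, hw.1, hw.1]; rw [if_pos rfl, if_neg hak, if_neg hak.symm, if_pos rfl]; rfl

lemma Em_sq {g : ℕ} {w : Fin (2*g) → ZMod 2} (h : (OmegaMat g (ZMod 2) *ᵥ w) ⬝ᵥ w = 0) :
    Em g w * Em g w = 0 := by
  rw [Em, vecMulVec_mul_vecMulVec, h]; simp

lemma mat_two_add_self {g : ℕ} (A : Matrix (Fin (2*g)) (Fin (2*g)) (ZMod 2)) : A + A = 0 := by
  ext i j; exact CharTwo.add_self_eq_zero _

lemma Em_tv_sq {g : ℕ} {w : Fin (2*g) → ZMod 2} (h : (OmegaMat g (ZMod 2) *ᵥ w) ⬝ᵥ w = 0) :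
    (1 + Em g w) * (1 + Em g w) = 1 := by
  rw [mul_add, add_mul, add_mul, Em_sq h, mul_one, one_mul, mul_one, add_zero, add_assoc,
    mat_two_add_self, add_zero]

/-- the transvection mod 2 -/
def Tu (g : ℕ) (w : Fin (2*g) → ZMod 2) (h : (OmegaMat g (ZMod 2) *ᵥ w) ⬝ᵥ w = 0) :
    GL (Fin (2*g)) (ZMod 2) := ⟨1 + Em g w, 1 + Em g w, Em_tv_sq h, Em_tv_sq h⟩

lemma Tu_represents {g : ℕ} {w : Fin (2*g) → ZMod 2} {k l : Fin (2*g+2)} (hw : IsPair g w k l)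
    (hkl : k ≠ l) : representsPerm g (1 + Em g w) (Equiv.swap k l) := by
  intro j
  convert Submodule.zero_mem _ using 1
  ext r
  have h1 : (permMat g (Equiv.swap k l) * PsiMat g) r j = PsiMat g (Equiv.swap k l r) j := by
    rw [mul_apply, Finset.sum_eq_single (Equiv.swap k l r)]
    · simp [permMat]
    · intro b _ hb
      have : Equiv.swap k l b ≠ r := by rintro rfl; simp at hb
      simp [permMat, this]
    · simp
  have h2 : (PsiMat g * (1 + Em g w) : Matrix _ _ (ZMod 2)) r j =
      PsiMat g r j + (PsiMat g *ᵥ w) r * (OmegaMat g (ZMod 2) *ᵥ w) j := by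
    rw [Matrix.mul_add, Matrix.mul_one, Em, mul_vecMulVec, Matrix.add_apply, vecMulVec_apply]
  rw [Matrix.sub_apply, h1, h2, hw.1, hw.2]
  change _ = (0 : ZMod 2)
  generalize hc : PsiMat g k j = x
  generalize hd : PsiMat g l j = y
  by_cases hrk : r = k
  · subst hrk
    rw [Equiv.swap_apply_left, hc, hd]; simp only [hkl, if_true, if_false]
    clear hc hd; revert x y; decide
  · by_cases hrl : r = l
    · subst hrl
      rw [Equiv.swap_apply_right, hc, hd]; simp only [hrk, if_true, if_false]
      clear hc hd; revert x y; decide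
    · rw [Equiv.swap_apply_of_ne_of_ne hrk hrl]; simp [hrk, hrl]

lemma Em_conj {g : ℕ} (v w : Fin (2*g) → ZMod 2) :
    (1 + Em g w) * Em g v * (1 + Em g w) = Em g (v + ((OmegaMat g (ZMod 2) *ᵥ w) ⬝ᵥ v) • w) := by
  have h1 : (1 + Em g w) *ᵥ v = v + ((OmegaMat g (ZMod 2) *ᵥ w) ⬝ᵥ v) • w := by
    rw [add_mulVec, one_mulVec, Em, vecMulVec_mulVec]; simp
  have h2 : (OmegaMat g (ZMod 2) *ᵥ v) ᵥ* (1 + Em g w) =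
      OmegaMat g (ZMod 2) *ᵥ ((1 + Em g w) *ᵥ v) := by
    rw [h1, vecMul_add, vecMul_one, Em, vecMul_vecMulVec, mulVec_add, mulVec_smul]
    congr 2
    rw [dotProduct_comm, dotProduct_mulVec, ← mulVec_transpose, OmegaMat_two_transpose]
  rw [← h1, show Em g v = vecMulVec v (OmegaMat g (ZMod 2) *ᵥ v) from rfl, mul_vecMulVec, vecMulVec_mul, h2]
  rfl

/-- decomposition of symmetric matrices -/
lemma sym_mem {g : ℕ} (L : AddSubmonoid (Matrix (Fin (2*g)) (Fin (2*g)) (ZMod 2)))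
    (h1 : ∀ k, 1 ≤ k → k ≤ 2 * g → Em g (bvec g k) ∈ L)
    (h2 : ∀ k l, 1 ≤ k → k ≤ 2 * g → 1 ≤ l → l ≤ 2 * g → k ≠ l → Em g (bvec g k + bvec g l) ∈ L)
    (S : Matrix (Fin (2*g)) (Fin (2*g)) (ZMod 2)) (hS : Sᵀ = S) :
    S * OmegaMat g (ZMod 2) ∈ L := by
  set P : Matrix (Fin (2*g)) (Fin (2*g)) (ZMod 2) := of fun i j => bvec g (j+1) i with hP
  set Q : Matrix (Fin (2*g)) (Fin (2*g)) (ZMod 2) := of fun i j => PsiMat g ⟨i+1, by omega⟩ j with hQ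
  have hQP : Q * P = 1 := by
    ext i j
    have := Psi_bvec g (j+1) (by omega) ⟨i+1, by omega⟩
    simp only [mulVec, dotProduct] at this
    simp only [mul_apply, hQ, hP, of_apply, this, Matrix.one_apply, Fin.ext_iff]
    simp
  have hPQ : P * Q = 1 := mul_eq_one_comm.mp hQP
  set S' := Q * S * Qᵀ with hS'
  have hsym : ∀ i j, S' i j = S' j i := by
    have : S'ᵀ = S' := by rw [hS']; simp [transpose_mul, hS, mul_assoc]
    intro i j; exact congrFun (congrFun this j) i
  have hSS : S = P * S' * Pᵀ := by
    have : Qᵀ * Pᵀ = 1 := by rw [← transpose_mul, hPQ, transpose_one]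
    rw [hS']
    calc S = (P * Q) * S * (Qᵀ * Pᵀ) := by rw [hPQ, this]; simp
      _ = _ := by simp only [mul_assoc]
  let F : Fin (2*g) → Fin (2*g) → Matrix (Fin (2*g)) (Fin (2*g)) (ZMod 2) := fun i j =>
    vecMulVec (bvec g (i+1)) (OmegaMat g (ZMod 2) *ᵥ bvec g (j+1))
  have hF : S * OmegaMat g (ZMod 2) = ∑ i, ∑ j, S' i j • F i j := by
    have hh : Pᵀ * OmegaMat g (ZMod 2) = (OmegaMat g (ZMod 2) * P)ᵀ := by
      rw [transpose_mul, OmegaMat_two_transpose]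
    rw [hSS, mul_assoc, hh]
    ext a b
    simp only [Matrix.sum_apply, Matrix.smul_apply, F, vecMulVec_apply, mul_apply, transpose_apply, hP, of_apply,
      mulVec, dotProduct, smul_eq_mul]
    rw [Finset.sum_comm]
    refine Finset.sum_congr rfl fun j _ => ?_
    rw [Finset.sum_mul]
    try rfl
    refine Finset.sum_congr rfl fun i _ => ?_
    ring
  have hdiag : ∀ i, F i i ∈ L := fun i => h1 _ (by omega) (by omega)
  have hoff : ∀ i j, i ≠ j → F i j + F j i ∈ L := by
    intro i j hij
    have e : F i j + F j i = F i i + (F j j + Em g (bvec g (i+1) + bvec g (j+1))) := by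
      simp only [F, Em, mulVec_add, vecMulVec_add, add_vecMulVec]
      generalize vecMulVec (bvec g (i+1)) (OmegaMat g (ZMod 2) *ᵥ bvec g (j+1)) = X
      generalize vecMulVec (bvec g (j+1)) (OmegaMat g (ZMod 2) *ᵥ bvec g (j+1)) = Y
      generalize vecMulVec (bvec g (i+1)) (OmegaMat g (ZMod 2) *ᵥ bvec g (i+1)) = Z
      generalize vecMulVec (bvec g (j+1)) (OmegaMat g (ZMod 2) *ᵥ bvec g (i+1)) = W
      ext a b
      simp only [Matrix.add_apply]
      generalize X a b = x
      generalize Y a b = y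
      generalize Z a b = z
      generalize W a b = w
      revert x y z w; decide
    rw [e]
    refine L.add_mem (hdiag i) (L.add_mem (hdiag j) (h2 _ _ (by omega) (by omega) (by omega) (by omega) ?_))
    intro h; exact hij (Fin.ext (by omega))
  have hsm : ∀ (c : ZMod 2) (M), M ∈ L → c • M ∈ L := by
    intro c M hM
    have : c = 0 ∨ c = 1 := by revert c; decide
    rcases this with rfl | rfl
    · rw [zero_smul]; exact L.zero_mem
    · rwa [one_smul]
  have hsplit : ∑ i, ∑ j, S' i j • F i j =
      ∑ i, ∑ j, (if i < j then S' i j • (F i j + F j i) else if i = j then S' i j • F i j else 0) := by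
    have e1 : ∀ i j, S' i j • F i j = (if i < j then S' i j • F i j else 0) +
        (if i = j then S' i j • F i j else 0) + (if j < i then S' i j • F i j else 0) := by
      intro i j
      rcases lt_trichotomy i j with h | h | h
      · simp [h, h.ne, h.not_gt]
      · simp [h]
      · simp [h, h.ne', h.not_gt]
    have e2 : ∀ i j, (if i < j then S' i j • (F i j + F j i) else if i = j then S' i j • F i j else 0)
        = (if i < j then S' i j • F i j else 0) +
        (if i = j then S' i j • F i j else 0) + (if i < j then S' j i • F j i else 0) := by
      intro i j
      rw [hsym j i]
      rcases lt_trichotomy i j with h | h | h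
      · simp [h, h.ne]
      · simp [h]
      · simp [h.ne', h.not_gt]
    simp_rw [e2]
    rw [Finset.sum_congr rfl fun i _ => Finset.sum_congr rfl fun j _ => e1 i j]
    simp only [Finset.sum_add_distrib]
    congr 1
    rw [Finset.sum_comm]
  rw [hF, hsplit]
  refine L.sum_mem fun i _ => L.sum_mem fun j _ => ?_
  split_ifs with h h'
  · exact hsm _ _ (hoff i j h.ne)
  · subst h'; exact hsm _ _ (hdiag i)
  · exact L.zero_mem

end helpers

section helpers2

open Filter Topology
open scoped commutatorElement

/-- matrices mod 2 that occur as `k`-th layer of elements of `C` -/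
noncomputable def Lk (g : ℕ) (C : Subgroup (GL (Fin (2*g)) ℤ_[2])) (k : ℕ) (hk : 1 ≤ k) :
    AddSubmonoid (Matrix (Fin (2*g)) (Fin (2*g)) (ZMod 2)) where
  carrier := {A | ∃ y ∈ C, ∃ B, (y : Matrix (Fin (2*g)) (Fin (2*g)) ℤ_[2]) = 1 + (2 : ℤ_[2])^k • B ∧
    (PadicInt.toZMod (p := 2)).mapMatrix B = A}
  zero_mem' := ⟨1, C.one_mem, 0, by simp, by simp⟩
  add_mem' := by
    rintro A A' ⟨y, hy, B, hB, rfl⟩ ⟨y', hy', B', hB', rfl⟩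
    refine ⟨y * y', C.mul_mem hy hy', B + B' + (2 : ℤ_[2])^k • (B * B'), ?_, ?_⟩
    · rw [Units.val_mul, hB, hB']
      simp only [mul_add, add_mul, one_mul, mul_one, smul_add, smul_mul_assoc, mul_smul_comm]
      abel
    · have h2 : PadicInt.toZMod (p := 2) 2 = 0 := by
        rw [map_ofNat]; rfl
      have : (PadicInt.toZMod (p := 2)).mapMatrix ((2 : ℤ_[2])^k • (B * B')) = 0 := by
        ext i j
        simp [h2, zero_pow (show k ≠ 0 by omega)]
      rw [map_add, this, map_add, add_zero]

lemma Lk_conj {g : ℕ} {C : Subgroup (GL (Fin (2*g)) ℤ_[2])} {k : ℕ} (hk : 1 ≤ k)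
    (x : GL (Fin (2*g)) ℤ_[2]) (hx : ∀ c ∈ C, x * c * x⁻¹ ∈ C)
    {A : Matrix (Fin (2*g)) (Fin (2*g)) (ZMod 2)} (hA : A ∈ Lk g C k hk) :
    (redMod2 g x : Matrix (Fin (2*g)) (Fin (2*g)) (ZMod 2)) * A *
      ((redMod2 g x)⁻¹ : GL (Fin (2*g)) (ZMod 2)) ∈ Lk g C k hk := by
  obtain ⟨y, hy, B, hB, rfl⟩ := hA
  refine ⟨x * y * x⁻¹, hx y hy, (x : Matrix (Fin (2*g)) (Fin (2*g)) ℤ_[2]) * B *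
    ((x⁻¹ : GL (Fin (2*g)) ℤ_[2]) : Matrix (Fin (2*g)) (Fin (2*g)) ℤ_[2]), ?_, ?_⟩
  · rw [Units.val_mul, Units.val_mul, hB, mul_add, add_mul, mul_one, ← Units.val_mul,
      mul_inv_cancel, Units.val_one]
    simp only [smul_mul_assoc, mul_smul_comm]
  · rw [map_mul, map_mul, ← redMod2_val, ← redMod2_val, map_inv]

/-- elementary matrix -/
noncomputable def E0 (g : ℕ) (hg : 2 ≤ g) : Matrix (Fin (2*g)) (Fin (2*g)) ℤ_[2] :=
  Matrix.single ⟨0, by omega⟩ ⟨1, by omega⟩ 1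

lemma E0_sq (g : ℕ) (hg : 2 ≤ g) : E0 g hg * E0 g hg = 0 := by
  rw [E0, Matrix.single_mul_single_of_ne]; simp [Fin.ext_iff]

lemma Omega_E0 (g : ℕ) (hg : 2 ≤ g) : OmegaMat g ℤ_[2] * E0 g hg =
    - Matrix.single ⟨1, by omega⟩ ⟨1, by omega⟩ 1 := by
  ext i j
  rw [mul_apply, Finset.sum_eq_single ⟨0, by omega⟩]
  · simp only [E0, OmegaMat, of_apply, Matrix.single_apply, Matrix.neg_apply, Fin.ext_iff]
    split_ifs <;> first | omega | (exfalso; tauto) | simp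
  · intro b _ hb
    simp only [ne_eq, Fin.ext_iff] at hb
    simp only [E0, Matrix.single_apply, Fin.ext_iff]
    rw [if_neg (by omega), mul_zero]
  · simp

lemma E0t_Omega (g : ℕ) (hg : 2 ≤ g) : (E0 g hg)ᵀ * OmegaMat g ℤ_[2] =
    Matrix.single ⟨1, by omega⟩ ⟨1, by omega⟩ 1 := by
  have : (E0 g hg)ᵀ * OmegaMat g ℤ_[2] = -(OmegaMat g ℤ_[2] * E0 g hg)ᵀ := by
    rw [transpose_mul, OmegaMat_transpose]; simp
  rw [this, Omega_E0]; simp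

/-- transvection over `ℤ_2` -/
noncomputable def Tz (g : ℕ) (hg : 2 ≤ g) (c : ℤ_[2]) : GL (Fin (2*g)) ℤ_[2] :=
  ⟨1 + c • E0 g hg, 1 - c • E0 g hg, by
    simp [mul_sub, add_mul, E0_sq], by
    simp [mul_add, sub_mul, E0_sq]⟩

lemma Tz_mult (g : ℕ) (hg : 2 ≤ g) (c : ℤ_[2]) :
    (Tz g hg c : Matrix (Fin (2*g)) (Fin (2*g)) ℤ_[2])ᵀ * OmegaMat g ℤ_[2] * (Tz g hg c) =
      OmegaMat g ℤ_[2] := by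
  change (1 + c • E0 g hg)ᵀ * OmegaMat g ℤ_[2] * (1 + c • E0 g hg) = _
  have h3 : (Matrix.single ⟨1, by omega⟩ ⟨1, by omega⟩ 1 : Matrix (Fin (2*g)) (Fin (2*g)) ℤ_[2]) * E0 g hg = 0 := by
    rw [E0, Matrix.single_mul_single_of_ne]; simp [Fin.ext_iff]
  rw [transpose_add, transpose_one, transpose_smul, add_mul, one_mul, smul_mul_assoc, E0t_Omega,
    mul_add, mul_one, mul_smul_comm, add_mul, Omega_E0, smul_mul_assoc, h3]
  simp

lemma Dm_E0 (g : ℕ) (hg : 2 ≤ g) (u : ℤ_[2]) : Dm g u * E0 g hg = E0 g hg := by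
  ext i j
  simp only [Dm, E0, diagonal_mul, Matrix.single_apply, Fin.ext_iff]
  split_ifs <;> first | omega | simp

lemma E0_Dm (g : ℕ) (hg : 2 ≤ g) (u : ℤ_[2]) : E0 g hg * Dm g u = u • E0 g hg := by
  ext i j
  simp only [Dm, E0, mul_diagonal, Matrix.single_apply, Fin.ext_iff, Matrix.smul_apply]
  split_ifs <;> first | omega | simp

lemma Tz_comm (g : ℕ) (hg : 2 ≤ g) (c : ℤ_[2]) :
    ((⁅Du g (-1), Tz g hg c⁆ : GL (Fin (2*g)) ℤ_[2]) : Matrix (Fin (2*g)) (Fin (2*g)) ℤ_[2]) =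
      1 + (2 * c) • (- E0 g hg) := by
  rw [commutatorElement_def]
  change Dm g ((-1 : ℤ_[2]ˣ) : ℤ_[2]) * (1 + c • E0 g hg) * Dm g (((-1)⁻¹ : ℤ_[2]ˣ) : ℤ_[2]) * (1 - c • E0 g hg) = _
  have : (((-1)⁻¹ : ℤ_[2]ˣ) : ℤ_[2]) = -1 := by simp
  rw [this, Units.val_neg, Units.val_one, mul_add, mul_one, add_mul, Dm_mul, mul_smul_comm, Dm_E0,
    smul_mul_assoc, E0_Dm, neg_mul_neg, one_mul, Dm_one]
  simp only [mul_sub, add_mul, smul_mul_assoc, mul_smul_comm, E0_sq, smul_zero, one_mul, mul_one]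
  module

lemma E0_map (g : ℕ) (hg : 2 ≤ g) :
    (PadicInt.toZMod (p := 2)).mapMatrix (E0 g hg) = Em g (bvec g 1) := by
  ext i j
  have h1 : bvec g 1 = dvec g 0 := by simp [bvec]
  have h2 := dvec_eq g 0 (by omega) (OmegaMat g (ZMod 2)) j
  rw [Em, vecMulVec_apply, h1, h2]
  simp only [E0, RingHom.mapMatrix_apply, map_apply, Matrix.single_apply, dvec, OmegaMat, of_apply,
    Fin.ext_iff]
  split_ifs <;> first | omega | (exfalso; tauto) | simp

lemma Tz_red (g : ℕ) (hg : 2 ≤ g) (c : ℤ_[2]) :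
    (redMod2 g (Tz g hg c) : Matrix (Fin (2*g)) (Fin (2*g)) (ZMod 2)) =
      1 + PadicInt.toZMod (p := 2) c • Em g (bvec g 1) := by
  rw [redMod2_val, ← E0_map g hg]
  change (PadicInt.toZMod (p := 2)).mapMatrix (1 + c • E0 g hg) = _
  rw [map_add, map_one]
  congr 1
  ext i j
  simp

lemma sym_of_sp {g : ℕ} {k : ℕ} (hk : 1 ≤ k) (A : Matrix (Fin (2*g)) (Fin (2*g)) ℤ_[2])
    (h : (1 + (2 : ℤ_[2])^k • A)ᵀ * OmegaMat g ℤ_[2] * (1 + (2 : ℤ_[2])^k • A) = OmegaMat g ℤ_[2]) :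
    ∃ S : Matrix (Fin (2*g)) (Fin (2*g)) (ZMod 2), Sᵀ = S ∧
      (PadicInt.toZMod (p := 2)).mapMatrix A = S * OmegaMat g (ZMod 2) := by
  have h1 : (2 : ℤ_[2])^k • (Aᵀ * OmegaMat g ℤ_[2] + OmegaMat g ℤ_[2] * A +
      (2 : ℤ_[2])^k • (Aᵀ * OmegaMat g ℤ_[2] * A)) = 0 := by
    rw [transpose_add, transpose_one, transpose_smul] at h
    simp only [mul_add, add_mul, one_mul, mul_one, smul_mul_assoc, mul_smul_comm] at h
    rw [← sub_eq_zero] at h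
    rw [← h]
    simp only [smul_add]
    abel
  have h2 : Aᵀ * OmegaMat g ℤ_[2] + OmegaMat g ℤ_[2] * A +
      (2 : ℤ_[2])^k • (Aᵀ * OmegaMat g ℤ_[2] * A) = 0 := by
    ext i j
    have := congrFun (congrFun h1 i) j
    rw [Matrix.smul_apply, smul_eq_mul] at this
    exact (mul_eq_zero.mp this).resolve_left (pow_ne_zero _ two_ne_zero)
  have h3 := congrArg (PadicInt.toZMod (p := 2)).mapMatrix h2
  have h4 : (PadicInt.toZMod (p := 2)).mapMatrix ((2 : ℤ_[2])^k • (Aᵀ * OmegaMat g ℤ_[2] * A)) = 0 := by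
    have h2 : PadicInt.toZMod (p := 2) 2 = 0 := by
      rw [map_ofNat]; rfl
    ext i j
    simp [h2, zero_pow (show k ≠ 0 by omega)]
  have ht : (PadicInt.toZMod (p := 2)).mapMatrix (Aᵀ) = ((PadicInt.toZMod (p := 2)).mapMatrix A)ᵀ := rfl
  rw [map_add, h4, add_zero, map_add, map_mul, map_mul, map_zero, OmegaMat_map, ht] at h3
  set a := (PadicInt.toZMod (p := 2)).mapMatrix A
  have h5 : aᵀ * OmegaMat g (ZMod 2) = OmegaMat g (ZMod 2) * a := by
    rw [eq_neg_of_add_eq_zero_left h3]; ext i j; exact CharTwo.neg_eq _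
  refine ⟨a * OmegaMat g (ZMod 2), ?_, ?_⟩
  · rw [transpose_mul, OmegaMat_two_transpose]
    calc OmegaMat g (ZMod 2) * aᵀ = OmegaMat g (ZMod 2) * (aᵀ * OmegaMat g (ZMod 2)) * OmegaMat g (ZMod 2) := by
          rw [mul_assoc, mul_assoc, OmegaMat_two_sq, mul_one]
      _ = _ := by rw [h5, ← mul_assoc, OmegaMat_two_sq, one_mul]
  · rw [mul_assoc, OmegaMat_two_sq, mul_one]

lemma tendsto_one {g : ℕ} (u : ℕ → GL (Fin (2*g)) ℤ_[2])
    (A : ℕ → Matrix (Fin (2*g)) (Fin (2*g)) ℤ_[2])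
    (h : ∀ k, (u k : Matrix (Fin (2*g)) (Fin (2*g)) ℤ_[2]) = 1 + (2 : ℤ_[2])^k • A k) :
    Tendsto u atTop (𝓝 1) := by
  have key : ∀ B : ℕ → Matrix (Fin (2*g)) (Fin (2*g)) ℤ_[2],
      Tendsto (fun k => 1 + (2 : ℤ_[2])^k • B k) atTop (𝓝 1) := by
    intro B
    have : Tendsto (fun k => (2 : ℤ_[2])^k • B k) atTop (𝓝 0) := by
      refine tendsto_pi_nhds.mpr fun i => tendsto_pi_nhds.mpr fun j => ?_
      have h2 : Tendsto (fun k : ℕ => ‖(2 : ℤ_[2])‖^k) atTop (𝓝 0) := by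
        apply tendsto_pow_atTop_nhds_zero_of_lt_one (norm_nonneg _)
        have := PadicInt.norm_p (p := 2)
        norm_num at this
        rw [this]; norm_num
      refine squeeze_zero_norm (fun k => ?_) h2
      change ‖(2 : ℤ_[2])^k * B k i j‖ ≤ _
      rw [norm_mul, norm_pow]
      exact mul_le_of_le_one_right (by positivity) (PadicInt.norm_le_one _)
    simpa using (tendsto_const_nhds (x := (1 : Matrix (Fin (2*g)) (Fin (2*g)) ℤ_[2]))).add this
  rw [Units.isEmbedding_embedProduct.tendsto_nhds_iff]
  simp only [Function.comp_def, Units.embedProduct_apply]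
  refine Tendsto.prodMk_nhds ?_ ?_
  · simp only [h]; exact key A
  · refine (MulOpposite.continuous_op.tendsto _).comp ?_
    have : ∀ k, ((u k)⁻¹ : GL (Fin (2*g)) ℤ_[2]).val = 1 + (2 : ℤ_[2])^k • (-(((u k)⁻¹ : GL (Fin (2*g)) ℤ_[2]).val * A k)) := by
      intro k
      have h1 : ((u k)⁻¹ : GL (Fin (2*g)) ℤ_[2]).val * (u k).val = 1 := by
        rw [← Units.val_mul, inv_mul_cancel, Units.val_one]
      rw [h, mul_add, mul_one, mul_smul_comm] at h1
      rw [smul_neg, ← sub_eq_add_neg, eq_sub_iff_add_eq, h1]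
    have hk := key fun k => -(((u k)⁻¹ : GL (Fin (2*g)) ℤ_[2]).val * A k)
    simp only [← this] at hk
    simpa using hk

lemma isOpen_ker_red (g : ℕ) (H : Subgroup (GL (Fin (2*g)) ℤ_[2])) :
    IsOpen {x : H | redMod2 g x = 1} := by
  have : {x : H | redMod2 g x = 1} = ⋂ i, ⋂ j, {x : H |
      ‖(((x : GL (Fin (2*g)) ℤ_[2]) : Matrix (Fin (2*g)) (Fin (2*g)) ℤ_[2]) - 1) i j‖ < 1} := by
    ext x
    simp only [Set.mem_ofPred_eq, Set.mem_iInter]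
    rw [Units.ext_iff, redMod2_val, Units.val_one, ← sub_eq_zero,
      ← map_one (PadicInt.toZMod (p := 2)).mapMatrix, ← map_sub, ← Matrix.ext_iff]
    refine forall_congr' fun i => forall_congr' fun j => ?_
    rw [PadicInt.norm_lt_one_iff_dvd, ← Ideal.mem_span_singleton, ← PadicInt.maximalIdeal_eq_span_p,
      ← PadicInt.ker_toZMod]
    rfl
  rw [this]
  refine isOpen_iInter_of_finite fun i => isOpen_iInter_of_finite fun j => ?_
  refine isOpen_lt (Continuous.norm ?_) continuous_const
  have h1 : Continuous fun x : H => ((x : GL (Fin (2*g)) ℤ_[2]) : Matrix (Fin (2*g)) (Fin (2*g)) ℤ_[2]) - 1 :=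
    (Units.continuous_val.comp continuous_subtype_val).sub continuous_const
  exact h1.matrix_elem i j

lemma mem_Lk_sym (g : ℕ) (hg : 2 ≤ g)
    (H : Subgroup (GL (Fin (2*g)) ℤ_[2]))
    (hpre : ∀ x : GL (Fin (2*g)) ℤ_[2], x ∈ GSpSet g ℤ_[2] →
      redMod2 g x ∈ Subgroup.map (redMod2 g) H → x ∈ H)
    (hS : ∀ B : GL (Fin (2*g)) (ZMod 2),
      (∃ σ : Equiv.Perm (Fin (2*g+2)),
        σ (Fin.last (2*g+1)) = Fin.last (2*g+1) ∧
        representsPerm g (B : Matrix (Fin (2*g)) (Fin (2*g)) (ZMod 2)) σ) →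
      B ∈ Subgroup.map (redMod2 g) H)
    (k : ℕ) (hk : 1 ≤ k) (S : Matrix (Fin (2*g)) (Fin (2*g)) (ZMod 2)) (hSs : Sᵀ = S) :
    S * OmegaMat g (ZMod 2) ∈ Lk g ⁅H, H⁆ k hk := by
  -- transvections attached to transpositions lie in the image
  have hT : ∀ (w : Fin (2*g) → ZMod 2) (a b : Fin (2*g+2)) (hw : IsPair g w a b) (hab : a ≠ b)
      (_ : (a : ℕ) ≤ 2*g) (_ : (b : ℕ) ≤ 2*g),
      Tu g w (hw.dot_self hab) ∈ Subgroup.map (redMod2 g) H := by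
    intro w a b hw hab ha hb
    refine hS _ ⟨Equiv.swap a b, Equiv.swap_apply_of_ne_of_ne ?_ ?_, Tu_represents hw hab⟩
    · intro h; rw [← h] at ha; simp at ha
    · intro h; rw [← h] at hb; simp at hb
  -- normality
  have hnorm : ∀ x ∈ H, ∀ c ∈ ⁅H, H⁆, x * c * x⁻¹ ∈ ⁅H, H⁆ := by
    intro x hx c hc
    have hcH : c ∈ H := Subgroup.commutator_le_self H hc
    have h1 : ⁅x, c⁆ ∈ ⁅H, H⁆ := Subgroup.commutator_mem_commutator hx hcH
    have h2 : x * c * x⁻¹ = ⁅x, c⁆ * c := by rw [commutatorElement_def]; group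
    rw [h2]; exact mul_mem h1 hc
  have hconj : ∀ (v w : Fin (2*g) → ZMod 2) (a b : Fin (2*g+2)) (_ : IsPair g w a b) (_ : a ≠ b)
      (_ : (a : ℕ) ≤ 2*g) (_ : (b : ℕ) ≤ 2*g), Em g v ∈ Lk g ⁅H, H⁆ k hk →
      Em g (v + ((OmegaMat g (ZMod 2) *ᵥ w) ⬝ᵥ v) • w) ∈ Lk g ⁅H, H⁆ k hk := by
    intro v w a b hw hab ha hb hv
    obtain ⟨x, hx, hxe⟩ := hT w a b hw hab ha hb
    have := Lk_conj hk x (hnorm x hx) hv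
    rw [hxe] at this
    rw [← Em_conj]
    exact this
  have hb1 : Em g (bvec g 1) ∈ Lk g ⁅H, H⁆ k hk := by
    have hDH : Du g (-1) ∈ H :=
      hpre _ ⟨_, Du_mult g _⟩ (by rw [redMod2_Du]; exact one_mem _)
    have hTH : Tz g hg (2^(k-1)) ∈ H := by
      refine hpre _ ⟨1, by rw [Tz_mult]; simp⟩ ?_
      have hc : PadicInt.toZMod (p := 2) (2^(k-1)) = 0 ∨ PadicInt.toZMod (p := 2) (2^(k-1)) = 1 := by
        generalize PadicInt.toZMod (p := 2) (2^(k-1)) = c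
        revert c; decide
      have hr := Tz_red g hg (2^(k-1))
      rcases hc with hc | hc
      · have : redMod2 g (Tz g hg (2^(k-1))) = 1 := by
          apply Units.ext; rw [hr, hc]; simp
        rw [this]; exact one_mem _
      · have hp := IsPair_bvec g 1 (by omega)
        have hne : (⟨0, by omega⟩ : Fin (2*g+2)) ≠ ⟨1, by omega⟩ := by simp [Fin.ext_iff]
        have : redMod2 g (Tz g hg (2^(k-1))) = Tu g (bvec g 1) (hp.dot_self hne) := by
          apply Units.ext; rw [hr, hc, one_smul]; rfl
        rw [this]; exact hT _ _ _ hp hne (by simp) (by simp; omega)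
    refine ⟨_, Subgroup.commutator_mem_commutator hDH hTH, - E0 g hg, ?_, ?_⟩
    · rw [Tz_comm, ← pow_succ', Nat.sub_add_cancel hk]
    · rw [map_neg, E0_map]; ext i j; exact CharTwo.neg_eq _
  have hpair : ∀ a b, 1 ≤ a → a ≤ 2*g → 1 ≤ b → b ≤ 2*g → a ≠ b →
      (OmegaMat g (ZMod 2) *ᵥ bvec g a) ⬝ᵥ bvec g b = 1 := by
    intro a b ha ha' hb hb' hab
    rw [(IsPair_bvec g a ha').dot, Psi_bvec g b hb', Psi_bvec g b hb']
    simp only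
    rw [if_pos trivial, if_neg (by omega), if_neg (by omega), if_neg (by omega)]; rfl
  have hbk : ∀ a, 1 ≤ a → a ≤ 2*g → Em g (bvec g a) ∈ Lk g ⁅H, H⁆ k hk := by
    intro a ha ha'
    by_cases h1 : a = 1
    · rw [h1]; exact hb1
    have hp := (IsPair_bvec g 1 (by omega)).add (IsPair_bvec g a ha')
    have := hconj (bvec g 1) _ _ _ hp (by simp [Fin.ext_iff]; omega) (by simp; omega) (by simp; omega) hb1
    rw [mulVec_add, add_dotProduct, hpair a 1 ha ha' (by omega) (by omega) h1,
      (IsPair_bvec g 1 (by omega)).dot_self (by simp [Fin.ext_iff]), zero_add, one_smul,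
      ← add_assoc] at this
    have e : bvec g 1 + bvec g 1 = 0 := by ext i; exact CharTwo.add_self_eq_zero (bvec g 1 i)
    rwa [e, zero_add] at this
  refine sym_mem _ hbk ?_ S hSs
  intro a b ha ha' hb hb' hab
  have := hconj (bvec g a) _ _ _ (IsPair_bvec g b hb') (by simp [Fin.ext_iff]; omega) (by simp)
    (by simpa using hb') (hbk a ha ha')
  rwa [hpair b a hb hb' ha ha' (Ne.symm hab), one_smul] at this

lemma approx_step (g : ℕ) (H : Subgroup (GL (Fin (2*g)) ℤ_[2]))
    (k : ℕ) (hk : 1 ≤ k)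
    (hL : ∀ S : Matrix (Fin (2*g)) (Fin (2*g)) (ZMod 2), Sᵀ = S →
      S * OmegaMat g (ZMod 2) ∈ Lk g ⁅H, H⁆ k hk)
    (z : GL (Fin (2*g)) ℤ_[2])
    (hz : (z : Matrix (Fin (2*g)) (Fin (2*g)) ℤ_[2])ᵀ * OmegaMat g ℤ_[2] * z = OmegaMat g ℤ_[2])
    (A : Matrix (Fin (2*g)) (Fin (2*g)) ℤ_[2])
    (hA : (z : Matrix (Fin (2*g)) (Fin (2*g)) ℤ_[2]) = 1 + (2 : ℤ_[2])^k • A) :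
    ∃ y ∈ ⁅H, H⁆, ∃ A', ((y⁻¹ * z : GL (Fin (2*g)) ℤ_[2]) : Matrix (Fin (2*g)) (Fin (2*g)) ℤ_[2])
      = 1 + (2 : ℤ_[2])^(k+1) • A' := by
  rw [hA] at hz
  obtain ⟨S, hSs, hAS⟩ := sym_of_sp hk A hz
  obtain ⟨y, hy, B, hB, hBS⟩ := hL S hSs
  obtain ⟨D, hD⟩ := mat_even g (A - B) (by rw [map_sub, hAS, hBS, sub_self])
  refine ⟨y, hy, ((y⁻¹ : GL (Fin (2*g)) ℤ_[2]) : Matrix (Fin (2*g)) (Fin (2*g)) ℤ_[2]) * D, ?_⟩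
  have h1 : (z : Matrix (Fin (2*g)) (Fin (2*g)) ℤ_[2]) = y + (2 : ℤ_[2])^(k+1) • D := by
    rw [hA, hB, pow_succ, mul_smul, ← hD, smul_sub]; abel
  rw [Units.val_mul, h1, mul_add, ← Units.val_mul, inv_mul_cancel, Units.val_one, mul_smul_comm]

lemma exists_mult (g : ℕ) (hg : 2 ≤ g) (H : Subgroup (GL (Fin (2*g)) ℤ_[2]))
    (hGSp : (H : Set (GL (Fin (2*g)) ℤ_[2])) ⊆ GSpSet g ℤ_[2]) :
    ∃ μ : H →* ℤ_[2]ˣ, ∀ x : H,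
      ((x : GL (Fin (2*g)) ℤ_[2]) : Matrix (Fin (2*g)) (Fin (2*g)) ℤ_[2])ᵀ * OmegaMat g ℤ_[2] *
        ((x : GL (Fin (2*g)) ℤ_[2]) : Matrix (Fin (2*g)) (Fin (2*g)) ℤ_[2])
        = (μ x : ℤ_[2]) • OmegaMat g ℤ_[2] := by
  have : ∀ x : H, ∃ m : ℤ_[2]ˣ,
      ((x : GL (Fin (2*g)) ℤ_[2]) : Matrix (Fin (2*g)) (Fin (2*g)) ℤ_[2])ᵀ * OmegaMat g ℤ_[2] *
        ((x : GL (Fin (2*g)) ℤ_[2]) : Matrix (Fin (2*g)) (Fin (2*g)) ℤ_[2])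
        = (m : ℤ_[2]) • OmegaMat g ℤ_[2] := fun x => hGSp x.2
  choose m hm using this
  refine ⟨MonoidHom.mk' m ?_, hm⟩
  intro a b
  apply Units.ext
  apply OmegaMat_inj g hg
  rw [← hm, Subgroup.coe_mul, Units.val_mul, transpose_mul]
  calc _ = ((b : GL (Fin (2*g)) ℤ_[2]) : Matrix (Fin (2*g)) (Fin (2*g)) ℤ_[2])ᵀ *
        (((a : GL (Fin (2*g)) ℤ_[2]) : Matrix (Fin (2*g)) (Fin (2*g)) ℤ_[2])ᵀ * OmegaMat g ℤ_[2] *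
        ((a : GL (Fin (2*g)) ℤ_[2]) : Matrix (Fin (2*g)) (Fin (2*g)) ℤ_[2])) *
        ((b : GL (Fin (2*g)) ℤ_[2]) : Matrix (Fin (2*g)) (Fin (2*g)) ℤ_[2]) := by
          simp only [mul_assoc]
    _ = _ := by
          rw [hm, mul_smul_comm, smul_mul_assoc, hm, smul_smul, Units.val_mul]

end helpers2

/-- Let `g ≥ 2` and let `H ⊆ GSp_{2g}(ℤ_2)` be a subgroup which is the full preimage (inside
`GSp_{2g}(ℤ_2)`, under mod-2 reduction) of its mod-2 image `H(2)`, and whose mod-2 image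
contains the embedded copy of `S_{2g+1}`. Then the homomorphism
`H → (H(2))^{ab} × (ℤ_2)^×`, whose first component is mod-2 reduction followed by
abelianization and whose second component is the multiplier map, induces an isomorphism
`H/[H,H]‾ ≅ (H(2))^{ab} × (ℤ_2)^×`; equivalently, this homomorphism is surjective and its
kernel is the closure of the commutator subgroup of `H`. -/
theorem maximal_monodromy_stmt3 (g : ℕ) (hg : 2 ≤ g)
    (H : Subgroup (GL (Fin (2*g)) ℤ_[2]))
    (hGSp : (H : Set (GL (Fin (2*g)) ℤ_[2])) ⊆ GSpSet g ℤ_[2])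
    (hpre : ∀ x : GL (Fin (2*g)) ℤ_[2], x ∈ GSpSet g ℤ_[2] →
      redMod2 g x ∈ Subgroup.map (redMod2 g) H → x ∈ H)
    (hS : ∀ B : GL (Fin (2*g)) (ZMod 2),
      (∃ σ : Equiv.Perm (Fin (2*g+2)),
        σ ⟨2*g+1, by omega⟩ = (⟨2*g+1, by omega⟩ : Fin (2*g+2)) ∧
        representsPerm g (B : Matrix (Fin (2*g)) (Fin (2*g)) (ZMod 2)) σ) →
      B ∈ Subgroup.map (redMod2 g) H) :
    ∃ f : ↥H →* (Abelianization ↥(Subgroup.map (redMod2 g) H)) × ℤ_[2]ˣ,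
      (∀ (x : ↥H) (u : ℤ_[2]ˣ),
        ((x : GL (Fin (2*g)) ℤ_[2]) : Matrix (Fin (2*g)) (Fin (2*g)) ℤ_[2])ᵀ
            * OmegaMat g ℤ_[2] * ((x : GL (Fin (2*g)) ℤ_[2]) : Matrix (Fin (2*g)) (Fin (2*g)) ℤ_[2])
          = (u : ℤ_[2]) • OmegaMat g ℤ_[2] →
        f x = (Abelianization.of ⟨redMod2 g ↑x, Subgroup.mem_map_of_mem (redMod2 g) x.2⟩, u)) ∧
      Function.Surjective f ∧
      (f.ker : Set ↥H) = closure ((commutator ↥H : Subgroup ↥H) : Set ↥H) := by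
  classical
  obtain ⟨μ, hμ⟩ := exists_mult g hg H hGSp
  let ρ : ↥H →* ↥(Subgroup.map (redMod2 g) H) := (redMod2 g).subgroupMap H
  have hρs : Function.Surjective ρ := (redMod2 g).subgroupMap_surjective H
  have hρ1 : ∀ x : H, ρ x = 1 ↔ redMod2 g x = 1 := fun x => by
    rw [Subtype.ext_iff]; rfl
  have hD : ∀ u : ℤ_[2]ˣ, Du g u ∈ H := fun u =>
    hpre _ ⟨_, Du_mult g _⟩ (by rw [redMod2_Du]; exact one_mem _)
  have hμD : ∀ u, μ ⟨Du g u, hD u⟩ = u := fun u =>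
    Units.ext (OmegaMat_inj g hg _ _ ((hμ ⟨Du g u, hD u⟩).symm.trans (Du_mult g u)))
  have hμ1 : ∀ x : H, μ x = 1 ↔
      ((x : GL (Fin (2*g)) ℤ_[2]) : Matrix (Fin (2*g)) (Fin (2*g)) ℤ_[2])ᵀ * OmegaMat g ℤ_[2] *
        ((x : GL (Fin (2*g)) ℤ_[2]) : Matrix (Fin (2*g)) (Fin (2*g)) ℤ_[2]) = OmegaMat g ℤ_[2] := by
    intro x
    rw [hμ]
    constructor
    · intro h; rw [h]; simp
    · intro h
      apply Units.ext
      apply OmegaMat_inj g hg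
      rw [h]; simp
  let F := (Abelianization.of.comp ρ).prod μ
  refine ⟨F, ?_, ?_, ?_⟩
  · intro x u hu
    have : μ x = u := Units.ext (OmegaMat_inj g hg _ _ ((hμ x).symm.trans hu))
    exact Prod.ext rfl this
  · rintro ⟨a, u⟩
    obtain ⟨b, rfl⟩ := QuotientGroup.mk_surjective a
    obtain ⟨x, rfl⟩ := hρs b
    refine ⟨x * ⟨Du g ((μ x)⁻¹ * u), hD _⟩, ?_⟩
    refine Prod.ext ?_ ?_
    · change Abelianization.of (ρ (x * ⟨Du g ((μ x)⁻¹ * u), hD _⟩)) = Abelianization.of (ρ x)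
      rw [map_mul ρ, (hρ1 ⟨Du g ((μ x)⁻¹ * u), hD _⟩).2 (redMod2_Du g _), mul_one]
    · change μ (x * ⟨Du g ((μ x)⁻¹ * u), hD _⟩) = u
      rw [map_mul, hμD, mul_inv_cancel_left]
  · have hker : ∀ x, x ∈ F.ker ↔ Abelianization.of (ρ x) = 1 ∧ μ x = 1 := fun x => by
      rw [MonoidHom.mem_ker]; exact Prod.ext_iff
    apply Set.Subset.antisymm
    · intro x hx
      obtain ⟨hx1, hx2⟩ := (hker x).1 hx
      have hx3 : ρ x ∈ (commutator ↥H).map ρ := by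
        rw [map_commutator_eq, MonoidHom.range_eq_top.2 hρs]
        exact (Abelianization.ker_of _).le hx1
      have hcμ : ∀ c ∈ commutator ↥H, μ c = 1 := fun c hc =>
        Abelianization.commutator_subset_ker μ hc
      have happ : ∀ k : ℕ, ∃ c ∈ commutator ↥H, ∃ A : Matrix (Fin (2*g)) (Fin (2*g)) ℤ_[2],
          (((c⁻¹ * x : ↥H) : GL (Fin (2*g)) ℤ_[2]) : Matrix (Fin (2*g)) (Fin (2*g)) ℤ_[2]) =
            1 + (2 : ℤ_[2])^(k+1) • A := by
        intro k
        induction k with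
        | zero =>
          obtain ⟨c, hc, hcx⟩ := hx3
          refine ⟨c, hc, ?_⟩
          have h1 : redMod2 g ((c⁻¹ * x : ↥H) : GL (Fin (2*g)) ℤ_[2]) = 1 := by
            rw [← hρ1, map_mul, map_inv, hcx, inv_mul_cancel]
          have h2 := congrArg Units.val h1
          rw [redMod2_val, Units.val_one, ← sub_eq_zero,
            ← map_one (PadicInt.toZMod (p := 2)).mapMatrix, ← map_sub] at h2
          obtain ⟨A, hA⟩ := mat_even g _ h2
          refine ⟨A, ?_⟩
          rw [zero_add, pow_one, ← hA]; abel
        | succ k ih =>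
          obtain ⟨c, hc, A, hA⟩ := ih
          have hz := (hμ1 (c⁻¹ * x)).1 (by rw [map_mul, map_inv, hcμ c hc, hx2]; simp)
          obtain ⟨y, hy, A', hA'⟩ := approx_step g H (k+1) (by omega)
            (mem_Lk_sym g hg H hpre hS (k+1) (by omega)) _ hz A hA
          rw [← Subgroup.map_subtype_commutator] at hy
          obtain ⟨y', hy', rfl⟩ := hy
          refine ⟨c * y', mul_mem hc hy', A', ?_⟩
          rw [← hA', _root_.mul_inv_rev, mul_assoc]
          rfl
      choose c hc A hA using happ
      have ht := tendsto_one (fun k => ((((c k)⁻¹ * x : ↥H)) : GL (Fin (2*g)) ℤ_[2]))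
        (fun k => (2 : ℤ_[2]) • A k) (fun k => by rw [hA, pow_succ, mul_smul])
      have ht' : Filter.Tendsto (fun k => (c k)⁻¹ * x) Filter.atTop (nhds 1) :=
        tendsto_subtype_rng.2 ht
      have ht2 : Filter.Tendsto c Filter.atTop (nhds x) := by
        have := (tendsto_const_nhds (x := x)).mul ht'.inv
        simpa using this
      exact mem_closure_of_tendsto ht2 (Filter.Eventually.of_forall hc)
    · refine closure_minimal ?_ ?_
      · exact Abelianization.commutator_subset_ker F
      · have e : (F.ker : Set ↥H) = ((Abelianization.of.comp ρ).ker : Set ↥H) ∩ {x : ↥H |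
            ((x : GL (Fin (2*g)) ℤ_[2]) : Matrix (Fin (2*g)) (Fin (2*g)) ℤ_[2])ᵀ * OmegaMat g ℤ_[2] *
            ((x : GL (Fin (2*g)) ℤ_[2]) : Matrix (Fin (2*g)) (Fin (2*g)) ℤ_[2]) = OmegaMat g ℤ_[2]} := by
          ext x
          exact (hker x).trans (and_congr Iff.rfl (hμ1 x))
        rw [e]
        refine IsClosed.inter ?_ ?_
        · apply Subgroup.isClosed_of_isOpen
          refine Subgroup.isOpen_mono (H₁ := ρ.ker) ?_ ?_
          · intro x hx
            change Abelianization.of (ρ x) = 1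
            rw [show ρ x = 1 from hx, map_one]
          · have : (ρ.ker : Set ↥H) = {x : ↥H | redMod2 g x = 1} := by
              ext x; exact hρ1 x
            rw [this]; exact isOpen_ker_red g H
        · have hc : Continuous fun x : ↥H =>
              ((x : GL (Fin (2*g)) ℤ_[2]) : Matrix (Fin (2*g)) (Fin (2*g)) ℤ_[2]) :=
            Units.continuous_val.comp continuous_subtype_val
          exact isClosed_eq ((hc.matrix_transpose.mul continuous_const).mul hc) continuous_const
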